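/- Let f = h + \overline{g} \in \mathcal{AK}_H with b_1 = g'(0), and for 0 < r < 1 let A(f(\mathbb{D}_r)) = \iint_{\mathbb{D}_r} J_f(z)\,dx\,dy denote the area of f(\mathbb{D}_r), where \mathbb{D}_r = \{z : |z| < r\} and J_f = |h'|^2 - |g'|^2. Then (\pi(1-|b_1|^2)/26)\{3 - (3r^2 + 8\sqrt{3} r + 3) (1-r)^{4/\sqrt{3}-1}/(1+r)^{4/\sqrt{3}+1}\} \leq A(f(\mathbb{D}_r)) \leq (\pi(1-|b_1|^2)/26)\{3 - (3r^2 - 8\sqrt{3} r + 3) (1+r)^{4/\sqrt{3}-1}/(1-r)^{4/\sqrt{3}+1}\}. -/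

import Mathlib

open Complex Metric ComplexConjugate MeasureTheory Real

noncomputable section

/-! Write `J` for the Jacobian of `f = h + conj g`. The map `f` is injective on the disc, so a
boundary point `z` of a disc `D(a, ρ)` is mapped outside the open convex set `f(D(a, ρ))` and some
component of `f` attains its maximum over the closed disc at `z`. The first-order condition
identifies this component with the one along the image of the outer normal, and the second-order
condition along the circle becomes, for `z = a + ρ e` with `|e| = 1`,
`0 ≤ J + ρ Re (e ∂J + e³ W)`, where `∂J` is the Wirtinger derivative of `J` and `W` is the
Wronskian of the derivatives of `h` and `g`. Discs internally tangent to the unit circle give the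
sharpest inequality. Averaging it over the directions `e · exp (± iπ/6)`, whose cubes are opposite,
eliminates `W` and leaves `|(1 - |z|²) ∂J - 2 conj z J| ≤ (4 / √3) J`.
Integrating this differential inequality along radii compares `J` with explicit radial densities,
whose integrals over discs are elementary. -/

open Filter Set Topology

section BoundaryMaximum

theorem deriv_deriv_nonpos_of_isLocalMax {φ : ℝ → ℝ} {x : ℝ} (hmax : IsLocalMax φ x)
    (hφ : ContinuousAt φ x) : deriv (deriv φ) x ≤ 0 := by
  by_contra! hpos
  have hmin : IsLocalMin φ x := isLocalMin_of_deriv_deriv_pos hpos hmax.deriv_eq_zero hφ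
  have hconst : φ =ᶠ[𝓝 x] fun _ => φ x := by
    filter_upwards [hmax, hmin] with y hle hge using le_antisymm hle hge
  have : deriv (deriv φ) x = 0 := by simpa using hconst.deriv.deriv.eq_of_nhds
  exact hpos.ne' this

variable {F : ℂ → ℂ} {a z : ℂ} {ρ θ : ℝ}

theorem hasDerivAt_re_comp_circleMap (hF : DifferentiableAt ℂ F (circleMap a ρ θ)) :
    HasDerivAt (fun t => (F (circleMap a ρ t)).re)
      (-((circleMap a ρ θ - a) * deriv F (circleMap a ρ θ)).im) θ := by
  have hcomp := hF.hasDerivAt.scomp θ (hasDerivAt_circleMap a ρ θ)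
  refine (Complex.reCLM.hasFDerivAt.comp_hasDerivAt θ hcomp).congr_deriv ?_
  rw [circleMap_sub_center, smul_eq_mul, mul_right_comm, reCLM_apply, mul_I_re]

theorem exists_circleMap_eq_of_mem_sphere (hz : z ∈ sphere a ρ) : ∃ θ, circleMap a ρ θ = z := by
  rwa [← abs_of_nonneg (nonneg_of_mem_sphere hz), ← range_circleMap] at hz

theorem isLocalMax_comp_circleMap {φ : ℂ → ℝ} (hρ : 0 ≤ ρ)
    (hmax : IsLocalMaxOn φ (sphere a ρ) (circleMap a ρ θ)) :
    IsLocalMax (φ ∘ circleMap a ρ) θ :=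
  hmax.comp_tendsto <| tendsto_nhdsWithin_iff.mpr
    ⟨(continuous_circleMap a ρ).continuousAt, .of_forall (circleMap_mem_sphere a hρ)⟩

theorem im_mul_deriv_eq_zero_of_isLocalMaxOn_sphere (hF : DifferentiableAt ℂ F z)
    (hz : z ∈ sphere a ρ) (hmax : IsLocalMaxOn (fun w => (F w).re) (sphere a ρ) z) :
    ((z - a) * deriv F z).im = 0 := by
  have hρ : 0 ≤ ρ := nonneg_of_mem_sphere hz
  obtain ⟨θ, rfl⟩ := exists_circleMap_eq_of_mem_sphere hz
  have hderiv := (isLocalMax_comp_circleMap hρ hmax).hasDerivAt_eq_zero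
    (hasDerivAt_re_comp_circleMap hF)
  exact neg_eq_zero.mp hderiv

theorem re_mul_deriv_nonneg_of_isLocalMaxOn_closedBall (hF : DifferentiableAt ℂ F z)
    (hz : z ∈ closedBall a ρ) (hmax : IsLocalMaxOn (fun w => (F w).re) (closedBall a ρ) z) :
    0 ≤ ((z - a) * deriv F z).re := by
  have ha : a ∈ closedBall a ρ := mem_closedBall_self (dist_nonneg.trans hz)
  have hcone : a - z ∈ posTangentConeAt (closedBall a ρ) z :=
    sub_mem_posTangentConeAt_of_segment_subset ((convex_closedBall a ρ).segment_subset hz ha)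
  have hderiv := Complex.reCLM.hasFDerivAt.comp z hF.hasDerivAt.complexToReal_fderiv
  have hle := hmax.hasFDerivWithinAt_nonpos hderiv.hasFDerivWithinAt hcone
  have heq : (deriv F z * (a - z)).re = -((z - a) * deriv F z).re := by
    rw [← Complex.neg_re]; ring_nf
  simpa [heq] using hle

/- Along `θ ↦ a + ρ e^{iθ}` the first derivative of `Re F` is again the real part of a holomorphic
function, namely of `w ↦ i (w - a) F' w`, so the same derivative formula applies twice. -/
theorem re_second_order_nonneg_of_isLocalMaxOn_sphere (hF : AnalyticAt ℂ F z)
    (hz : z ∈ sphere a ρ) (hmax : IsLocalMaxOn (fun w => (F w).re) (sphere a ρ) z) :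
    0 ≤ ((z - a) * deriv F z + (z - a) ^ 2 * deriv (deriv F) z).re := by
  have hρ : 0 ≤ ρ := nonneg_of_mem_sphere hz
  obtain ⟨θ, rfl⟩ := exists_circleMap_eq_of_mem_sphere hz
  set c := circleMap a ρ θ
  have hfirst : deriv (fun t => (F (circleMap a ρ t)).re) =ᶠ[𝓝 θ]
      fun t => (I * ((circleMap a ρ t - a) * deriv F (circleMap a ρ t))).re := by
    have hnear := (continuous_circleMap a ρ).continuousAt.eventually hF.eventually_analyticAt
    filter_upwards [hnear] with t ht
    rw [(hasDerivAt_re_comp_circleMap ht.differentiableAt).deriv, I_mul_re]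
  have hangular : HasDerivAt (fun w => I * ((w - a) * deriv F w))
      (I * (deriv F c + (c - a) * deriv (deriv F) c)) c := by
    simpa using (((hasDerivAt_id c).sub_const a).mul
      hF.deriv.differentiableAt.hasDerivAt).const_mul I
  have hsecond := deriv_deriv_nonpos_of_isLocalMax (isLocalMax_comp_circleMap hρ hmax)
    (hasDerivAt_re_comp_circleMap hF.differentiableAt).continuousAt
  have hval : (c - a) * (I * (deriv F c + (c - a) * deriv (deriv F) c)) =
      I * ((c - a) * deriv F c + (c - a) ^ 2 * deriv (deriv F) c) := by ring
  change deriv (deriv fun t => (F (circleMap a ρ t)).re) θ ≤ 0 at hsecond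
  rw [hfirst.deriv_eq, (hasDerivAt_re_comp_circleMap hangular.differentiableAt).deriv,
    hangular.deriv, hval, I_mul_im] at hsecond
  exact neg_nonpos.mp hsecond

end BoundaryMaximum

section InnerProductSpace

variable {E : Type*} [NormedAddCommGroup E] [InnerProductSpace ℝ E]

theorem exists_ne_zero_inner_lt_of_notMem [CompleteSpace E] {K : Set E} (hconv : Convex ℝ K)
    (hopen : IsOpen K) (hne : K.Nonempty) {w : E} (hw : w ∉ K) :
    ∃ u : E, u ≠ 0 ∧ ∀ y ∈ K, inner ℝ u y < inner ℝ u w := by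
  obtain ⟨φ, hφ⟩ := geometric_hahn_banach_open_point hconv hopen hw
  refine ⟨(InnerProductSpace.toDual ℝ E).symm φ, ?_, by simpa using hφ⟩
  obtain ⟨y, hy⟩ := hne
  rw [Ne, LinearIsometryEquiv.map_eq_zero_iff]
  rintro rfl
  exact lt_irrefl _ (hφ y hy)

theorem norm_sub_smul_add_lt_one {z e : E} (he : ‖e‖ = 1) (hz : ‖z‖ < 1) {ρ : ℝ} (hρ : 0 < ρ)
    (h : ρ * (2 * (1 - inner ℝ z e)) < 1 - ‖z‖ ^ 2) : ‖z - ρ • e‖ + ρ < 1 := by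
  have hinner : inner ℝ z e ≤ ‖z‖ := by simpa [he] using real_inner_le_norm z e
  have hρ1 : ρ < 1 := by nlinarith
  have hsq : ‖z - ρ • e‖ ^ 2 < (1 - ρ) ^ 2 := by
    rw [norm_sub_sq_real, inner_smul_right, norm_smul, he, Real.norm_of_nonneg hρ.le]
    linarith
  linarith [lt_of_pow_lt_pow_left₀ 2 (by linarith) hsq]

theorem eventually_mem_ball_of_inner_neg {γ : ℝ → E} {v a z : E} {ρ : ℝ}
    (hγ : HasDerivAt γ v 0) (hγ0 : γ 0 = z) (hz : z ∈ sphere a ρ) (hv : inner ℝ (z - a) v < 0) :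
    ∀ᶠ ε in 𝓝[>] 0, γ ε ∈ ball a ρ := by
  have hderiv : HasDerivAt (fun ε => ‖γ ε - a‖ ^ 2) (2 * inner ℝ (z - a) v) 0 := by
    simpa [hγ0] using (hγ.sub_const a).norm_sq
  have hslope := hderiv.hasDerivWithinAt.limsup_slope_le' self_notMem_Ioi
    (show 2 * inner ℝ (z - a) v < 0 by linarith)
  filter_upwards [hslope, self_mem_nhdsWithin] with ε hε hε0
  rw [mem_Ioi] at hε0
  rw [slope_def_field, hγ0, sub_zero, div_lt_iff₀ hε0, zero_mul, sub_neg,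
    mem_sphere_iff_norm.mp hz] at hε
  rw [mem_ball_iff_norm]
  exact lt_of_pow_lt_pow_left₀ 2 (nonneg_of_mem_sphere hz) hε

theorem eventually_add_smul_mem_image_inter_ball [CompleteSpace E] {F : Type*}
    [NormedAddCommGroup F] [NormedSpace ℝ F] {f : E → F} {f' : E ≃L[ℝ] F} {a z : E} {ρ : ℝ}
    (hf : HasStrictFDerivAt f (f' : E →L[ℝ] F) z) (hz : z ∈ sphere a ρ) {w : F}
    (hw : inner ℝ (z - a) (f'.symm w) < 0) {s : Set E} (hs : s ∈ 𝓝 z) :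
    ∀ᶠ ε : ℝ in 𝓝[>] 0, f z + ε • w ∈ f '' (s ∩ ball a ρ) := by
  have hline : HasDerivAt (fun ε : ℝ => f z + ε • w) w 0 := by
    simpa using ((hasDerivAt_id (0 : ℝ)).smul_const w).const_add (f z)
  have hline0 : f z + (0 : ℝ) • w = f z := by simp
  set γ : ℝ → E := fun ε => hf.localInverse f f' z (f z + ε • w) with hγ_def
  have hγ0 : γ 0 = z := by simp only [hγ_def, hline0, hf.localInverse_apply_image]
  have hγ : HasDerivAt γ (f'.symm w) 0 := by
    have hinv := hf.to_localInverse.hasFDerivAt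
    rw [← hline0] at hinv
    exact hinv.comp_hasDerivAt 0 hline
  have hmem : ∀ᶠ ε in 𝓝 (0 : ℝ), γ ε ∈ s := hγ.continuousAt.eventually (by rwa [hγ0])
  have hright : ∀ᶠ ε : ℝ in 𝓝 0, f (γ ε) = f z + ε • w := by
    have hinv := hf.eventually_right_inverse
    rw [← hline0] at hinv
    exact hline.continuousAt.eventually hinv
  filter_upwards [eventually_mem_ball_of_inner_neg hγ hγ0 hz hw, nhdsWithin_le_nhds hmem,
    nhdsWithin_le_nhds hright] with ε hball hs hf
  exact ⟨γ ε, ⟨hs, hball⟩, hf⟩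

end InnerProductSpace

section InjectivityPropagation

theorem eq_of_mem_closure_of_injOn {X Y : Type*} [TopologicalSpace X] [T2Space X]
    [TopologicalSpace Y] {f : X → Y} {s : Set X} {x y : X} (hinj : InjOn f s) (hx : s ∈ 𝓝 x)
    (hopen : 𝓝 (f x) ≤ map f (𝓝 x)) (hy : y ∈ closure s) (hcont : ContinuousAt f y)
    (hxy : f x = f y) : x = y := by
  by_contra hne
  obtain ⟨U, V, hU, hV, hxU, hyV, hUV⟩ := t2_separation hne
  have hnear : f ⁻¹' (f '' (U ∩ s)) ∈ 𝓝 y := by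
    refine hcont (hxy ▸ hopen ?_)
    exact image_mem_map (inter_mem (hU.mem_nhds hxU) hx)
  obtain ⟨y', ⟨⟨x', ⟨hx'U, hx's⟩, hfx'⟩, hy'V⟩, hy's⟩ :=
    mem_closure_iff_nhds.mp hy _ (inter_mem hnear (hV.mem_nhds hyV))
  obtain rfl : x' = y' := hinj hx's hy's hfx'
  exact disjoint_left.mp hUV hx'U hy'V

theorem isClosed_setOf_injOn_ball {X Y : Type*} [PseudoMetricSpace X] (f : X → Y) (c : X) :
    IsClosed {r : ℝ | InjOn f (ball c r)} := by
  refine isClosed_of_closure_subset fun r hr x hx y hy hxy => ?_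
  obtain ⟨r', hr', hinj⟩ := mem_closure_iff_nhds.mp hr _ (Ioi_mem_nhds (max_lt hx hy))
  exact hinj (mem_ball.mpr ((le_max_left _ _).trans_lt hr'))
    (mem_ball.mpr ((le_max_right _ _).trans_lt hr')) hxy

variable {E Y : Type*} [NormedAddCommGroup E] [NormedSpace ℝ E] [ProperSpace E]
  [TopologicalSpace Y] [T2Space Y] {f : E → Y} {c : E}

theorem exists_pos_injOn_ball_add {r : ℝ} (hr : 0 ≤ r) (hinj : InjOn f (closedBall c r))
    (hcont : ∀ x ∈ closedBall c r, ContinuousAt f x)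
    (hloc : ∀ x ∈ closedBall c r, ∃ u ∈ 𝓝 x, InjOn f u) :
    ∃ δ > 0, InjOn f (ball c (δ + r)) := by
  obtain ⟨t, ht, hinj_t⟩ := hinj.exists_mem_nhdsSet (isCompact_closedBall c r) hcont hloc
  obtain ⟨U, hU, hrU, hUt⟩ := mem_nhdsSet_iff_exists.mp ht
  obtain ⟨δ, hδ, hδU⟩ := (isCompact_closedBall c r).exists_thickening_subset_open hU hrU
  rw [thickening_closedBall hδ hr] at hδU
  exact ⟨δ, hδ, hinj_t.mono (hδU.trans hUt)⟩

theorem injOn_ball_of_forall_injOn_closedBall {R : ℝ} (hcont : ∀ x ∈ ball c R, ContinuousAt f x)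
    (hloc : ∀ x ∈ ball c R, ∃ u ∈ 𝓝 x, InjOn f u)
    (hstep : ∀ r, 0 < r → r < R → InjOn f (ball c r) → InjOn f (closedBall c r)) :
    InjOn f (ball c R) := by
  obtain hR | hR := lt_or_ge R 0
  · simp [ball_eq_empty.mpr hR.le]
  refine ((isClosed_setOf_injOn_ball f c).inter isClosed_Icc).Icc_subset_of_forall_exists_gt
    (a := 0) (by simp) ?_ (right_mem_Icc.mpr hR)
  rintro r ⟨hinj, hr0, hrR⟩ y hy
  have hsub : closedBall c r ⊆ ball c R := closedBall_subset_ball hrR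
  have hclosed : InjOn f (closedBall c r) := by
    obtain rfl | hr := hr0.eq_or_lt
    · simp
    · exact hstep r hr hrR hinj
  obtain ⟨δ, hδ, hinjδ⟩ := exists_pos_injOn_ball_add hr0 hclosed
    (fun x hx => hcont x (hsub hx)) (fun x hx => hloc x (hsub hx))
  exact ⟨min (δ + r) y, hinjδ.mono (ball_subset_ball (min_le_left _ _)),
    lt_min (by linarith) hy, min_le_right _ _⟩

end InjectivityPropagation

section SensePreserving

/-- The harmonic function `h + conj g` with holomorphic part `h` and co-holomorphic part `g`. -/
def harmonicMap (h g : ℂ → ℂ) (z : ℂ) : ℂ := h z + conj (g z)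

/-- The Jacobian of `harmonicMap h g`. -/
def harmonicJacobian (h g : ℂ → ℂ) (z : ℂ) : ℝ := ‖deriv h z‖ ^ 2 - ‖deriv g z‖ ^ 2

/-- The Wirtinger derivative `∂/∂z` of `harmonicJacobian h g`. -/
def harmonicJacobianDz (h g : ℂ → ℂ) (z : ℂ) : ℂ :=
  deriv (deriv h) z * conj (deriv h z) - deriv (deriv g) z * conj (deriv g z)

/-- The Wronskian of `h'` and `g'`; it equals `h' ^ 2` times the derivative of the dilatation of
`harmonicMap h g`. -/
def derivWronskian (h g : ℂ → ℂ) (z : ℂ) : ℂ :=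
  deriv (deriv g) z * deriv h z - deriv (deriv h) z * deriv g z

/-- The holomorphic function whose real part is the component of `harmonicMap h g` along `u`. -/
def holomorphicComponent (u : ℂ) (h g : ℂ → ℂ) (z : ℂ) : ℂ := conj u * h z + u * g z

/-- The normal at `z` to the image under `harmonicMap h g` of the circle through `z` centred at
`a`, obtained by rotating the tangent vector of `θ ↦ a + ρ e^{iθ}` clockwise by a right angle. -/
def outerNormal (a : ℂ) (h g : ℂ → ℂ) (z : ℂ) : ℂ :=
  (z - a) * deriv h z - conj ((z - a) * deriv g z)

/-- `harmonicMap h g` is harmonic near `z` with positive Jacobian at `z`. -/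
structure SensePreservingAt (h g : ℂ → ℂ) (z : ℂ) : Prop where
  analyticAt_left : AnalyticAt ℂ h z
  analyticAt_right : AnalyticAt ℂ g z
  norm_deriv_lt : ‖deriv g z‖ < ‖deriv h z‖

variable {h g : ℂ → ℂ} {a u z : ℂ} {ρ : ℝ}

theorem inner_add_conj (u p q : ℂ) : inner ℝ u (p + conj q) = (conj u * p + u * q).re := by
  rw [Complex.inner]
  simp only [mul_re, add_re, add_im, conj_re, conj_im]
  ring

theorem re_holomorphicComponent (u : ℂ) (h g : ℂ → ℂ) (z : ℂ) :
    (holomorphicComponent u h g z).re = inner ℝ u (harmonicMap h g z) :=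
  (inner_add_conj u (h z) (g z)).symm

theorem deriv_holomorphicComponent (u : ℂ) (hh : DifferentiableAt ℂ h z)
    (hg : DifferentiableAt ℂ g z) :
    deriv (holomorphicComponent u h g) z = holomorphicComponent u (deriv h) (deriv g) z :=
  ((hh.hasDerivAt.const_mul (conj u)).add (hg.hasDerivAt.const_mul u)).deriv

theorem sub_mul_holomorphicComponent_outerNormal (hz : z ∈ sphere a ρ) :
    (z - a) * holomorphicComponent (outerNormal a h g z) (deriv h) (deriv g) z =
      ((ρ ^ 2 * harmonicJacobian h g z : ℝ) : ℂ) := by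
  rw [harmonicJacobian, ← mem_sphere_iff_norm.mp hz]
  push_cast
  simp only [holomorphicComponent, outerNormal, ← Complex.conj_mul', map_sub, map_mul, conj_conj]
  ring

theorem sub_sq_mul_holomorphicComponent_outerNormal (hz : z ∈ sphere a ρ) :
    (z - a) ^ 2 * holomorphicComponent (outerNormal a h g z) (deriv (deriv h)) (deriv (deriv g)) z =
      ((ρ ^ 2 : ℝ) : ℂ) * ((z - a) * harmonicJacobianDz h g z) +
        (z - a) ^ 3 * derivWronskian h g z := by
  rw [← mem_sphere_iff_norm.mp hz]
  push_cast
  simp only [holomorphicComponent, outerNormal, harmonicJacobianDz, derivWronskian,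
    ← Complex.conj_mul', map_sub, map_mul, conj_conj]
  ring

theorem exists_continuousLinearEquiv_mul_add_conj_mul {p q : ℂ} (hpq : ‖q‖ < ‖p‖) :
    ∃ e : ℂ ≃L[ℝ] ℂ, ∀ v, e v = p * v + conj (q * v) := by
  let L : ℂ →ₗ[ℝ] ℂ :=
    LinearMap.mulLeft ℝ p + (Complex.conjAe : ℂ →ₗ[ℝ] ℂ) ∘ₗ LinearMap.mulLeft ℝ q
  have hL : Function.Injective L := by
    refine (injective_iff_map_eq_zero L).mpr fun v hv => ?_
    by_contra hv0
    have heq : p * v = -conj (q * v) := eq_neg_of_add_eq_zero_left hv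
    have hnorm : ‖p‖ * ‖v‖ = ‖q‖ * ‖v‖ := by
      rw [← norm_mul, heq, norm_neg, RCLike.norm_conj, norm_mul]
    exact hpq.ne' (mul_right_cancel₀ (norm_ne_zero_iff.mpr hv0) hnorm)
  exact ⟨(LinearEquiv.ofInjectiveEndo L hL).toContinuousLinearEquiv, fun _ => rfl⟩

namespace SensePreservingAt

theorem harmonicJacobian_pos (hf : SensePreservingAt h g z) : 0 < harmonicJacobian h g z :=
  sub_pos.mpr (pow_lt_pow_left₀ hf.norm_deriv_lt (norm_nonneg _) two_ne_zero)

theorem exists_hasStrictFDerivAt (hf : SensePreservingAt h g z) :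
    ∃ e : ℂ ≃L[ℝ] ℂ, (∀ v, e v = deriv h z * v + conj (deriv g z * v)) ∧
      HasStrictFDerivAt (harmonicMap h g) (e : ℂ →L[ℝ] ℂ) z := by
  obtain ⟨e, he⟩ := exists_continuousLinearEquiv_mul_add_conj_mul hf.norm_deriv_lt
  have hh := hf.analyticAt_left.hasStrictDerivAt.complexToReal_fderiv
  have hg := hf.analyticAt_right.hasStrictDerivAt.complexToReal_fderiv
  refine ⟨e, he, (hh.add (conjCLE.hasStrictFDerivAt.comp z hg)).congr_fderiv ?_⟩
  ext v
  simp [he]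

theorem continuousAt (hf : SensePreservingAt h g z) : ContinuousAt (harmonicMap h g) z :=
  have ⟨_, _, hderiv⟩ := hf.exists_hasStrictFDerivAt
  hderiv.continuousAt

theorem map_nhds_eq (hf : SensePreservingAt h g z) :
    map (harmonicMap h g) (𝓝 z) = 𝓝 (harmonicMap h g z) :=
  have ⟨_, _, hderiv⟩ := hf.exists_hasStrictFDerivAt
  hderiv.map_nhds_eq_of_equiv

theorem exists_injOn (hf : SensePreservingAt h g z) :
    ∃ s ∈ 𝓝 z, InjOn (harmonicMap h g) s := by
  obtain ⟨_, _, hderiv⟩ := hf.exists_hasStrictFDerivAt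
  let φ := hderiv.toOpenPartialHomeomorph (harmonicMap h g)
  exact ⟨φ.source, φ.open_source.mem_nhds hderiv.mem_toOpenPartialHomeomorph_source, φ.injOn⟩

theorem deriv_deriv_holomorphicComponent (hf : SensePreservingAt h g z) (u : ℂ) :
    deriv (deriv (holomorphicComponent u h g)) z =
      holomorphicComponent u (deriv (deriv h)) (deriv (deriv g)) z := by
  have hnear : deriv (holomorphicComponent u h g) =ᶠ[𝓝 z]
      holomorphicComponent u (deriv h) (deriv g) := by
    filter_upwards [hf.analyticAt_left.eventually_analyticAt,
      hf.analyticAt_right.eventually_analyticAt] with w hh hg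
    exact deriv_holomorphicComponent u hh.differentiableAt hg.differentiableAt
  rw [hnear.deriv_eq]
  exact deriv_holomorphicComponent u hf.analyticAt_left.deriv.differentiableAt
    hf.analyticAt_right.deriv.differentiableAt

theorem analyticAt_holomorphicComponent (hf : SensePreservingAt h g z) (u : ℂ) :
    AnalyticAt ℂ (holomorphicComponent u h g) z :=
  (analyticAt_const.mul hf.analyticAt_left).add (analyticAt_const.mul hf.analyticAt_right)

theorem holomorphicComponent_deriv_ne_zero (hf : SensePreservingAt h g z) (hu : u ≠ 0) :
    holomorphicComponent u (deriv h) (deriv g) z ≠ 0 := by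
  intro hzero
  have heq : conj u * deriv h z = -(u * deriv g z) := eq_neg_of_add_eq_zero_left hzero
  have hnorm : ‖u‖ * ‖deriv h z‖ = ‖u‖ * ‖deriv g z‖ := by
    rw [← RCLike.norm_conj u, ← norm_mul, heq, norm_neg, norm_mul, RCLike.norm_conj]
  exact hf.norm_deriv_lt.ne' (mul_left_cancel₀ (norm_ne_zero_iff.mpr hu) hnorm)

theorem exists_pos_eq_sub_mul_holomorphicComponent (hf : SensePreservingAt h g z)
    (hz : z ∈ sphere a ρ) (hρ : 0 < ρ) (hu : u ≠ 0)
    (hmax : IsMaxOn (fun w => inner ℝ u (harmonicMap h g w)) (closedBall a ρ) z) :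
    ∃ μ : ℝ, 0 < μ ∧ (z - a) * holomorphicComponent u (deriv h) (deriv g) z = μ := by
  have hF := (hf.analyticAt_holomorphicComponent u).differentiableAt
  simp only [← re_holomorphicComponent] at hmax
  have him := im_mul_deriv_eq_zero_of_isLocalMaxOn_sphere hF hz
    (hmax.on_subset sphere_subset_closedBall).localize
  have hre := re_mul_deriv_nonneg_of_isLocalMaxOn_closedBall hF (sphere_subset_closedBall hz)
    hmax.localize
  rw [deriv_holomorphicComponent u hf.analyticAt_left.differentiableAt
    hf.analyticAt_right.differentiableAt] at him hre
  set p := (z - a) * holomorphicComponent u (deriv h) (deriv g) z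
  have hp : p = (p.re : ℂ) := Complex.ext rfl him
  have hp0 : p ≠ 0 := mul_ne_zero (sub_ne_zero.mpr (ne_of_mem_sphere hz hρ.ne'))
    (hf.holomorphicComponent_deriv_ne_zero hu)
  refine ⟨p.re, hre.lt_of_ne fun h0 => hp0 ?_, hp⟩
  rw [hp, ← h0, ofReal_zero]

theorem exists_pos_smul_outerNormal_eq (hf : SensePreservingAt h g z)
    (hz : z ∈ sphere a ρ) (hρ : 0 < ρ) (hu : u ≠ 0)
    (hmax : IsMaxOn (fun w => inner ℝ u (harmonicMap h g w)) (closedBall a ρ) z) :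
    ∃ t : ℝ, 0 < t ∧ t • u = outerNormal a h g z := by
  obtain ⟨μ, hμ, hμ_eq⟩ := hf.exists_pos_eq_sub_mul_holomorphicComponent hz hρ hu hmax
  have hμ_conj := congrArg conj hμ_eq
  simp only [holomorphicComponent, map_mul, map_add, conj_conj, conj_ofReal] at hμ_eq hμ_conj
  set c : ℝ := ρ ^ 2 * harmonicJacobian h g z with hc
  have hc_pos : 0 < c := mul_pos (pow_pos hρ 2) hf.harmonicJacobian_pos
  have hc_eq : (c : ℂ) = conj (z - a) * (z - a) *
      (conj (deriv h z) * deriv h z - conj (deriv g z) * deriv g z) := by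
    rw [hc, harmonicJacobian, ← mem_sphere_iff_norm.mp hz]
    push_cast
    simp only [Complex.conj_mul']
  have hkey : (c : ℂ) * u = μ * outerNormal a h g z := by
    rw [hc_eq, outerNormal, map_mul]
    linear_combination ((z - a) * deriv h z) * hμ_conj - (conj (z - a) * conj (deriv g z)) * hμ_eq
  refine ⟨c / μ, by positivity, ?_⟩
  rw [real_smul, ofReal_div, div_mul_eq_mul_div, hkey,
    mul_div_cancel_left₀ _ (ofReal_ne_zero.mpr hμ.ne')]

theorem second_order_nonneg (hf : SensePreservingAt h g z) (hz : z ∈ sphere a ρ)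
    (hmax : IsMaxOn (fun w => inner ℝ (outerNormal a h g z) (harmonicMap h g w))
      (closedBall a ρ) z) :
    0 ≤ ρ ^ 2 * (harmonicJacobian h g z + ((z - a) * harmonicJacobianDz h g z).re) +
      ((z - a) ^ 3 * derivWronskian h g z).re := by
  simp only [← re_holomorphicComponent] at hmax
  have hsecond := re_second_order_nonneg_of_isLocalMaxOn_sphere
    (hf.analyticAt_holomorphicComponent _) hz (hmax.on_subset sphere_subset_closedBall).localize
  rw [hf.deriv_deriv_holomorphicComponent, deriv_holomorphicComponent _
    hf.analyticAt_left.differentiableAt hf.analyticAt_right.differentiableAt,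
    sub_mul_holomorphicComponent_outerNormal hz, sub_sq_mul_holomorphicComponent_outerNormal hz,
    add_re, add_re, ofReal_re, re_ofReal_mul] at hsecond
  linarith

theorem eventually_sub_smul_mem_image_inter_ball (hf : SensePreservingAt h g z)
    (hz : z ∈ sphere a ρ) (hρ : 0 < ρ) (hu : u ≠ 0)
    (hmax : IsMaxOn (fun w => inner ℝ u (harmonicMap h g w)) (closedBall a ρ) z) {s : Set ℂ}
    (hs : s ∈ 𝓝 z) :
    ∀ᶠ ε : ℝ in 𝓝[>] 0, harmonicMap h g z + ε • -u ∈ harmonicMap h g '' (s ∩ ball a ρ) := by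
  obtain ⟨μ, hμ, hμ_eq⟩ := hf.exists_pos_eq_sub_mul_holomorphicComponent hz hρ hu hmax
  obtain ⟨e, he, hderiv⟩ := hf.exists_hasStrictFDerivAt
  refine eventually_add_smul_mem_image_inter_ball hderiv hz ?_ hs
  set v := e.symm u
  have hv : deriv h z * v + conj (deriv g z * v) = u := by rw [← he, e.apply_symm_apply]
  have hnorm : ‖u‖ ^ 2 = (holomorphicComponent u (deriv h) (deriv g) z * v).re := by
    rw [← real_inner_self_eq_norm_sq]
    nth_rw 2 [← hv]
    rw [inner_add_conj, holomorphicComponent]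
    ring_nf
  have hinner : μ * inner ℝ (z - a) v = ‖z - a‖ ^ 2 * ‖u‖ ^ 2 := by
    rw [hnorm, Complex.inner, ← re_ofReal_mul, ← re_ofReal_mul, ← hμ_eq, ofReal_pow,
      ← Complex.conj_mul']
    ring_nf
  have hza : 0 < ‖z - a‖ := by rwa [mem_sphere_iff_norm.mp hz]
  have hpos : 0 < inner ℝ (z - a) v :=
    (pos_iff_pos_of_mul_pos (by rw [hinner]; positivity)).mp hμ
  rw [map_neg, inner_neg_right]
  exact neg_neg_of_pos hpos

end SensePreservingAt

theorem isOpen_image_harmonicMap {s : Set ℂ} (hs : IsOpen s)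
    (hf : ∀ z ∈ s, SensePreservingAt h g z) : IsOpen (harmonicMap h g '' s) := by
  rw [isOpen_iff_mem_nhds]
  rintro _ ⟨z, hz, rfl⟩
  rw [← (hf z hz).map_nhds_eq]
  exact image_mem_map (hs.mem_nhds hz)

theorem exists_isMaxOn_inner_harmonicMap (hρ : 0 < ρ)
    (hf : ∀ w ∈ closedBall a ρ, SensePreservingAt h g w)
    (hconv : Convex ℝ (harmonicMap h g '' ball a ρ))
    (hz : harmonicMap h g z ∉ harmonicMap h g '' ball a ρ) :
    ∃ u : ℂ, u ≠ 0 ∧ IsMaxOn (fun w => inner ℝ u (harmonicMap h g w)) (closedBall a ρ) z := by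
  have hopen := isOpen_image_harmonicMap isOpen_ball fun w hw => hf w (ball_subset_closedBall hw)
  obtain ⟨u, hu, hlt⟩ := exists_ne_zero_inner_lt_of_notMem hconv hopen
    ((nonempty_ball.mpr hρ).image _) hz
  have hball : IsMaxOn (fun w => inner ℝ u (harmonicMap h g w)) (ball a ρ) z :=
    fun w hw => (hlt _ (mem_image_of_mem _ hw)).le
  rw [← closure_ball a hρ.ne'] at hf ⊢
  exact ⟨u, hu, hball.closure fun w hw =>
    ContinuousAt.continuousWithinAt (.inner continuousAt_const (hf w hw).continuousAt)⟩

/- If two boundary points had the same image `w`, moving inwards from `w` along a supporting normal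
would lift to two disjoint curves in the open disc. -/
theorem injOn_closedBall_harmonicMap (hρ : 0 < ρ)
    (hf : ∀ w ∈ closedBall a ρ, SensePreservingAt h g w)
    (hconv : Convex ℝ (harmonicMap h g '' ball a ρ)) (hinj : InjOn (harmonicMap h g) (ball a ρ)) :
    InjOn (harmonicMap h g) (closedBall a ρ) := by
  have hinterior : ∀ z₁ ∈ ball a ρ, ∀ z₂ ∈ closedBall a ρ,
      harmonicMap h g z₁ = harmonicMap h g z₂ → z₁ = z₂ := fun z₁ h₁ z₂ h₂ heq =>
    eq_of_mem_closure_of_injOn hinj (isOpen_ball.mem_nhds h₁)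
      (hf z₁ (ball_subset_closedBall h₁)).map_nhds_eq.ge (by rwa [closure_ball a hρ.ne'])
      (hf z₂ h₂).continuousAt heq
  intro z₁ h₁ z₂ h₂ heq
  by_contra hne
  have hz₁ : z₁ ∈ sphere a ρ := h₁.eq_of_not_lt fun hlt => hne (hinterior z₁ hlt z₂ h₂ heq)
  have hz₂ : z₂ ∈ sphere a ρ :=
    h₂.eq_of_not_lt fun hlt => hne (hinterior z₂ hlt z₁ h₁ heq.symm).symm
  have hnotMem : harmonicMap h g z₁ ∉ harmonicMap h g '' ball a ρ := by
    rintro ⟨z, hz, hzeq⟩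
    obtain rfl := hinterior z hz z₁ h₁ hzeq
    exact hne (hinterior z hz z₂ h₂ heq)
  obtain ⟨u, hu, hmax⟩ := exists_isMaxOn_inner_harmonicMap hρ hf hconv hnotMem
  obtain ⟨U, V, hU, hV, hzU, hzV, hUV⟩ := t2_separation hne
  have hlift₁ := (hf z₁ h₁).eventually_sub_smul_mem_image_inter_ball hz₁ hρ hu hmax
    (hU.mem_nhds hzU)
  have hlift₂ := (hf z₂ h₂).eventually_sub_smul_mem_image_inter_ball hz₂ hρ hu
    (by simpa only [IsMaxOn, IsMaxFilter, heq] using hmax) (hV.mem_nhds hzV)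
  obtain ⟨ε, ⟨x, ⟨hxU, hx⟩, hfx⟩, ⟨y, ⟨hyV, hy⟩, hfy⟩⟩ := (hlift₁.and hlift₂).exists
  obtain rfl : x = y := hinj hx hy (by rw [hfx, hfy, heq])
  exact disjoint_left.mp hUV hxU hyV

end SensePreserving

section ConvexOnDiscs

/-- The affine-invariant form of the class `𝒜𝒦_H`: `harmonicMap h g` is sense-preserving on the unit
disc and maps every disc compactly contained in it onto a convex set. The normalization of `h` and
`g` at the origin is not imposed. -/
structure ConvexOnDiscs (h g : ℂ → ℂ) : Prop where
  sensePreservingAt : ∀ z ∈ ball (0 : ℂ) 1, SensePreservingAt h g z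
  convex_image_ball : ∀ a ∈ ball (0 : ℂ) 1, ∀ r : ℝ, 0 < r → r < 1 - ‖a‖ →
    Convex ℝ (harmonicMap h g '' ball a r)

theorem exists_cube_eq_I_and_add_conj_eq_sqrt_three :
    ∃ c : ℂ, ‖c‖ = 1 ∧ c ^ 3 = I ∧ c + conj c = (√3 : ℝ) := by
  have hsq : √3 ^ 2 = 3 := Real.sq_sqrt (by norm_num)
  refine ⟨⟨√3 / 2, 1 / 2⟩, ?_, ?_, ?_⟩
  · rw [← sq_eq_sq₀ (norm_nonneg _) zero_le_one, Complex.sq_norm, normSq_mk]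
    linear_combination hsq / 4
  · apply Complex.ext <;> simp only [pow_succ, pow_zero, one_mul, mul_re, mul_im, I_re, I_im]
    · linear_combination √3 / 8 * hsq
    · linear_combination 3 / 8 * hsq
  · apply Complex.ext <;> simp

theorem norm_le_of_forall_re_mul_nonneg {w : ℂ} {b : ℝ}
    (hw : ∀ e : ℂ, ‖e‖ = 1 → 0 ≤ b + (e * w).re) : ‖w‖ ≤ b := by
  obtain ⟨e, he, hew⟩ := Complex.exists_norm_eq_mul_self w
  have hneg := hw (-e) (by rwa [norm_neg])
  rw [neg_mul, ← hew, neg_re, ofReal_re] at hneg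
  linarith

namespace ConvexOnDiscs

variable {h g : ℂ → ℂ} {e z : ℂ}

theorem injOn_ball (hf : ConvexOnDiscs h g) : InjOn (harmonicMap h g) (ball 0 1) := by
  refine injOn_ball_of_forall_injOn_closedBall
    (fun z hz => (hf.sensePreservingAt z hz).continuousAt)
    (fun z hz => (hf.sensePreservingAt z hz).exists_injOn) fun r hr0 hr1 hinj => ?_
  exact injOn_closedBall_harmonicMap hr0
    (fun z hz => hf.sensePreservingAt z (closedBall_subset_ball hr1 hz))
    (hf.convex_image_ball 0 (mem_ball_self one_pos) r hr0 (by rwa [norm_zero, sub_zero])) hinj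

theorem second_order_nonneg_of_norm_sub_smul_add_lt (hf : ConvexOnDiscs h g) (he : ‖e‖ = 1) {ρ : ℝ}
    (hρ : 0 < ρ) (hz : ‖z - ρ • e‖ + ρ < 1) :
    0 ≤ harmonicJacobian h g z +
      ρ * (e * harmonicJacobianDz h g z + e ^ 3 * derivWronskian h g z).re := by
  set a := z - ρ • e with ha
  have hza : z - a = ρ * e := by rw [ha, sub_sub_cancel, real_smul]
  have hsphere : z ∈ sphere a ρ := by
    rw [mem_sphere_iff_norm, hza, norm_mul, he, mul_one, Complex.norm_of_nonneg hρ.le]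
  have hsub : closedBall a ρ ⊆ ball 0 1 :=
    closedBall_subset_ball' (by rwa [dist_zero_right, add_comm])
  have hsense : ∀ w ∈ closedBall a ρ, SensePreservingAt h g w :=
    fun w hw => hf.sensePreservingAt w (hsub hw)
  have hmem : z ∈ closedBall a ρ := sphere_subset_closedBall hsphere
  have hconv := hf.convex_image_ball a (hsub (mem_closedBall_self hρ.le)) ρ hρ
    (lt_sub_iff_add_lt'.mpr hz)
  have hnotMem : harmonicMap h g z ∉ harmonicMap h g '' ball a ρ := by
    rintro ⟨w, hw, hwz⟩
    obtain rfl := hf.injOn_ball (hsub (ball_subset_closedBall hw)) (hsub hmem) hwz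
    exact sphere_disjoint_ball.notMem_of_mem_left hsphere hw
  obtain ⟨u, hu, hmax⟩ := exists_isMaxOn_inner_harmonicMap hρ hsense hconv hnotMem
  obtain ⟨t, ht, htu⟩ := (hsense z hmem).exists_pos_smul_outerNormal_eq hsphere hρ hu hmax
  have hnormal : IsMaxOn (fun w => inner ℝ (outerNormal a h g z) (harmonicMap h g w))
      (closedBall a ρ) z := by
    simp only [← htu, real_inner_smul_left]
    exact fun w hw => mul_le_mul_of_nonneg_left (hmax hw) ht.le
  have hsecond := (hsense z hmem).second_order_nonneg hsphere hnormal
  have hcube : (ρ * e) ^ 3 * derivWronskian h g z =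
      ((ρ ^ 3 : ℝ) : ℂ) * (e ^ 3 * derivWronskian h g z) := by push_cast; ring
  rw [hza, hcube, re_ofReal_mul, mul_assoc, re_ofReal_mul] at hsecond
  rw [add_re]
  exact nonneg_of_mul_nonneg_right (by linear_combination hsecond) (pow_pos hρ 2)

/- Let the disc through `z` grow until it is internally tangent to the unit circle. -/
theorem directional_second_order_nonneg (hf : ConvexOnDiscs h g) (he : ‖e‖ = 1) (hz : ‖z‖ < 1) :
    0 ≤ 2 * (1 - inner ℝ z e) * harmonicJacobian h g z + (1 - ‖z‖ ^ 2) *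
      (e * harmonicJacobianDz h g z + e ^ 3 * derivWronskian h g z).re := by
  set x := (e * harmonicJacobianDz h g z + e ^ 3 * derivWronskian h g z).re
  have hinner : inner ℝ z e ≤ ‖z‖ := by simpa [he] using real_inner_le_norm z e
  have hpos : 0 < 2 * (1 - inner ℝ z e) := by linarith
  set R := (1 - ‖z‖ ^ 2) / (2 * (1 - inner ℝ z e)) with hR
  have hR0 : 0 < R := div_pos (by nlinarith [norm_nonneg z]) hpos
  have hlt : ∀ᶠ ρ in 𝓝[<] R, 0 ≤ harmonicJacobian h g z + ρ * x := by
    filter_upwards [Ioo_mem_nhdsLT hR0] with ρ ⟨hρ0, hρR⟩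
    exact hf.second_order_nonneg_of_norm_sub_smul_add_lt he hρ0
      (norm_sub_smul_add_lt_one he hz hρ0 ((lt_div_iff₀ hpos).mp hρR))
  have hcont : Continuous fun ρ : ℝ => harmonicJacobian h g z + ρ * x := by fun_prop
  have hlim : 0 ≤ harmonicJacobian h g z + R * x :=
    ge_of_tendsto ((hcont.tendsto R).mono_left nhdsWithin_le_nhds) hlt
  have hscale : 2 * (1 - inner ℝ z e) * harmonicJacobian h g z + (1 - ‖z‖ ^ 2) * x =
      2 * (1 - inner ℝ z e) * (harmonicJacobian h g z + R * x) := by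
    rw [mul_add, ← mul_assoc, hR, mul_div_cancel₀ _ hpos.ne']
  rw [hscale]
  exact mul_nonneg hpos.le hlim

/- The directions `e * exp (± i π / 6)` have cubes `± i * e ^ 3`, so adding the two inequalities
cancels the Wronskian. -/
theorem re_mul_sub_nonneg (hf : ConvexOnDiscs h g) (he : ‖e‖ = 1) (hz : ‖z‖ < 1) :
    0 ≤ 4 / √3 * harmonicJacobian h g z +
      (e * ((1 - ‖z‖ ^ 2) * harmonicJacobianDz h g z -
        2 * conj z * harmonicJacobian h g z)).re := by
  obtain ⟨c, hc, hcube, hadd⟩ := exists_cube_eq_I_and_add_conj_eq_sqrt_three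
  have hcube' : conj c ^ 3 = -I := by rw [← map_pow, hcube, conj_I]
  have hplus := hf.directional_second_order_nonneg (e := e * c) (by rw [norm_mul, he, hc, one_mul])
    hz
  have hminus := hf.directional_second_order_nonneg (e := e * conj c)
    (by rw [norm_mul, he, RCLike.norm_conj, hc, one_mul]) hz
  set J := harmonicJacobian h g z
  set P := harmonicJacobianDz h g z
  set W := derivWronskian h g z
  have hinner : inner ℝ z (e * c) + inner ℝ z (e * conj c) = √3 * (e * conj z).re := by
    rw [← inner_add_right, ← mul_add, hadd, Complex.inner, ← re_ofReal_mul]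
    ring_nf
  have hre : (e * c * P + (e * c) ^ 3 * W).re + (e * conj c * P + (e * conj c) ^ 3 * W).re =
      √3 * (e * P).re := by
    rw [← add_re, ← re_ofReal_mul, ← hadd, mul_pow, mul_pow, hcube, hcube']
    ring_nf
  have hsplit : (e * ((1 - ‖z‖ ^ 2) * P - 2 * conj z * J)).re =
      (1 - ‖z‖ ^ 2) * (e * P).re - 2 * J * (e * conj z).re := by
    rw [← re_ofReal_mul, ← re_ofReal_mul, ← sub_re]
    push_cast
    ring_nf
  have hsum : 0 ≤ √3 * (4 / √3 * J + ((1 - ‖z‖ ^ 2) * (e * P).re - 2 * J * (e * conj z).re)) := by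
    rw [mul_add, ← mul_assoc, mul_div_cancel₀ 4 (by positivity)]
    linear_combination hplus + hminus - 2 * J * hinner + (1 - ‖z‖ ^ 2) * hre
  rw [hsplit]
  exact nonneg_of_mul_nonneg_right hsum (by positivity)

theorem norm_harmonicJacobianDz_sub_le (hf : ConvexOnDiscs h g) (hz : ‖z‖ < 1) :
    ‖(1 - ‖z‖ ^ 2) * harmonicJacobianDz h g z - 2 * conj z * harmonicJacobian h g z‖ ≤
      4 / √3 * harmonicJacobian h g z :=
  norm_le_of_forall_re_mul_nonneg fun _ he => hf.re_mul_sub_nonneg he hz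

end ConvexOnDiscs

end ConvexOnDiscs

section RadialDensity

theorem mul_le_mul_of_deriv_mul_le {φ φ' ψ ψ' : ℝ → ℝ} {a b : ℝ} (hab : a ≤ b)
    (hφ : ∀ s ∈ Icc a b, HasDerivAt φ (φ' s) s) (hψ : ∀ s ∈ Icc a b, HasDerivAt ψ (ψ' s) s)
    (hpos : ∀ s ∈ Icc a b, 0 < ψ s) (hle : ∀ s ∈ Icc a b, φ' s * ψ s ≤ φ s * ψ' s) :
    φ b * ψ a ≤ φ a * ψ b := by
  have hderiv : ∀ s ∈ Icc a b,
      HasDerivAt (φ / ψ) ((φ' s * ψ s - φ s * ψ' s) / ψ s ^ 2) s := fun s hs =>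
    (hφ s hs).div (hψ s hs) (hpos s hs).ne'
  have hanti : AntitoneOn (φ / ψ) (Icc a b) :=
    antitoneOn_of_hasDerivWithinAt_nonpos (convex_Icc a b)
      (fun s hs => (hderiv s hs).continuousAt.continuousWithinAt)
      (fun s hs => (hderiv s (interior_subset hs)).hasDerivWithinAt)
      fun s hs => div_nonpos_of_nonpos_of_nonneg (sub_nonpos.mpr (hle s (interior_subset hs)))
        (sq_nonneg _)
  have hdiv := hanti (left_mem_Icc.mpr hab) (right_mem_Icc.mpr hab) hab
  exact (div_le_div_iff₀ (hpos b (right_mem_Icc.mpr hab)) (hpos a (left_mem_Icc.mpr hab))).mp hdiv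

/-- The solution of `(1 - s ^ 2) * y' = (4 * s + 2 * q) * y`, `y 0 = 1`, on `(-1, 1)`. -/
def radialDensity (q s : ℝ) : ℝ := (1 + s) ^ (q - 2) * (1 - s) ^ (-q - 2)

variable {q s r : ℝ}

theorem radialDensity_zero (q : ℝ) : radialDensity q 0 = 1 := by
  simp [radialDensity]

theorem radialDensity_pos (q : ℝ) (hs : s ∈ Ioo (-1) 1) : 0 < radialDensity q s :=
  mul_pos (rpow_pos_of_pos (by linarith [hs.1]) _) (rpow_pos_of_pos (by linarith [hs.2]) _)

theorem hasDerivAt_radialDensity (q : ℝ) (hs : s ∈ Ioo (-1) 1) :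
    HasDerivAt (radialDensity q) ((4 * s + 2 * q) / (1 - s ^ 2) * radialDensity q s) s := by
  have hplus : 0 < 1 + s := by linarith [hs.1]
  have hminus : 0 < 1 - s := by linarith [hs.2]
  have hderiv := (((hasDerivAt_id s).const_add 1).rpow_const (p := q - 2) (.inl hplus.ne')).mul
    (((hasDerivAt_id s).const_sub 1).rpow_const (p := -q - 2) (.inl hminus.ne'))
  refine hderiv.congr_deriv ?_
  have hfactor : 1 - s ^ 2 = (1 + s) * (1 - s) := by ring
  rw [radialDensity, hfactor, id, Real.rpow_sub_one hplus.ne', Real.rpow_sub_one hminus.ne']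
  field_simp
  ring

theorem continuousOn_radialDensity (q : ℝ) : ContinuousOn (radialDensity q) (Ioo (-1) 1) :=
  fun _ hs => (hasDerivAt_radialDensity q hs).continuousAt.continuousWithinAt

theorem le_mul_radialDensity {φ φ' : ℝ → ℝ} (hr0 : 0 ≤ r) (hr1 : r < 1)
    (hφ : ∀ s ∈ Icc 0 r, HasDerivAt φ (φ' s) s)
    (hle : ∀ s ∈ Icc 0 r, (1 - s ^ 2) * φ' s ≤ (4 * s + 2 * q) * φ s) :
    φ r ≤ φ 0 * radialDensity q r := by
  have hsub : Icc 0 r ⊆ Ioo (-1) 1 := Icc_subset_Ioo (by norm_num) hr1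
  have hcompare := mul_le_mul_of_deriv_mul_le hr0 hφ
    (fun s hs => hasDerivAt_radialDensity q (hsub hs)) (fun s hs => radialDensity_pos q (hsub hs))
    fun s hs => by
      have hs1 : 0 < 1 - s ^ 2 := by nlinarith [(hsub hs).1, (hsub hs).2]
      rw [← mul_assoc, mul_div_left_comm, ← mul_comm_div, div_mul_eq_mul_div]
      refine mul_le_mul_of_nonneg_right ?_ (radialDensity_pos q (hsub hs)).le
      rw [le_div_iff₀ hs1]
      linarith [hle s hs]
  rwa [radialDensity_zero, mul_one] at hcompare

theorem mul_radialDensity_le {φ φ' : ℝ → ℝ} (hr0 : 0 ≤ r) (hr1 : r < 1)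
    (hφ : ∀ s ∈ Icc 0 r, HasDerivAt φ (φ' s) s)
    (hle : ∀ s ∈ Icc 0 r, (4 * s + 2 * q) * φ s ≤ (1 - s ^ 2) * φ' s) :
    φ 0 * radialDensity q r ≤ φ r := by
  have hneg := le_mul_radialDensity (q := q) hr0 hr1 (fun s hs => (hφ s hs).neg) fun s hs => by
    simp only [Pi.neg_apply]
    linarith [hle s hs]
  simp only [Pi.neg_apply] at hneg
  linarith

theorem integrableOn_radialDensity_norm (q : ℝ) (hr : r < 1) :
    IntegrableOn (fun z : ℂ => radialDensity q ‖z‖) (ball 0 r) := by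
  have hcont : ContinuousOn (fun z : ℂ => radialDensity q ‖z‖) (closedBall 0 r) :=
    (continuousOn_radialDensity q).comp continuous_norm.continuousOn fun z hz =>
      ⟨by linarith [norm_nonneg z], (mem_closedBall_zero_iff.mp hz).trans_lt hr⟩
  exact (hcont.integrableOn_compact (isCompact_closedBall 0 r)).mono_set ball_subset_closedBall

theorem sub_sq_mul_radialDensity (q : ℝ) (hs : s ∈ Ioo (-1) 1) :
    (1 - s ^ 2) * radialDensity q s = (1 + s) ^ (q - 1) / (1 - s) ^ (q + 1) := by
  have hplus : 0 < 1 + s := by linarith [hs.1]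
  have hminus : 0 < 1 - s := by linarith [hs.2]
  have hp : (1 + s) ^ (q - 1) = (1 + s) ^ (q - 2) * (1 + s) := by
    rw [← Real.rpow_add_one hplus.ne']; ring_nf
  have hm : ((1 - s) ^ (q + 1))⁻¹ = (1 - s) ^ (-q - 2) * (1 - s) := by
    rw [← Real.rpow_neg hminus.le, ← Real.rpow_add_one hminus.ne']; ring_nf
  rw [radialDensity, div_eq_mul_inv, hp, hm]
  ring

theorem integral_mul_radialDensity (hq : q ^ 2 ≠ 1) (hr0 : 0 ≤ r) (hr1 : r < 1) :
    ∫ s in 0..r, s * radialDensity q s = (1 - (r ^ 2 - 2 * q * r + 1) *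
      ((1 + r) ^ (q - 1) / (1 - r) ^ (q + 1))) / (4 * (q ^ 2 - 1)) := by
  have hsub : uIcc 0 r ⊆ Ioo (-1) 1 := by
    rw [uIcc_of_le hr0]
    exact Icc_subset_Ioo (by norm_num) hr1
  have hq0 : q ^ 2 - 1 ≠ 0 := sub_ne_zero.mpr hq
  have hderiv : ∀ s ∈ uIcc 0 r,
      HasDerivAt (fun s => -((s ^ 2 - 2 * q * s + 1) * ((1 - s ^ 2) * radialDensity q s)) /
        (4 * (q ^ 2 - 1))) (s * radialDensity q s) s := fun s hs => by
    have hquad : HasDerivAt (fun s : ℝ => s ^ 2 - 2 * q * s + 1) (2 * s - 2 * q) s := by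
      simpa using (((hasDerivAt_id s).pow 2).sub ((hasDerivAt_id s).const_mul (2 * q))).add_const 1
    have hsq : HasDerivAt (fun s : ℝ => 1 - s ^ 2) (-(2 * s)) s := by
      simpa using ((hasDerivAt_id s).pow 2).const_sub 1
    have hs1 : 1 - s ^ 2 ≠ 0 := by nlinarith [(hsub hs).1, (hsub hs).2]
    refine ((hquad.mul (hsq.mul (hasDerivAt_radialDensity q (hsub hs)))).neg.div_const
      _).congr_deriv ?_
    simp only [Pi.mul_apply]
    field_simp
    ring
  have hint : IntervalIntegrable (fun s => s * radialDensity q s) volume 0 r :=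
    (continuousOn_id.mul ((continuousOn_radialDensity q).mono hsub)).intervalIntegrable
  rw [intervalIntegral.integral_eq_sub_of_hasDerivAt hderiv hint,
    sub_sq_mul_radialDensity q (hsub right_mem_uIcc)]
  simp only [radialDensity_zero]
  ring

theorem integral_ball_fun_norm (φ : ℝ → ℝ) (hr : 0 ≤ r) :
    ∫ z in ball (0 : ℂ) r, φ ‖z‖ = 2 * π * ∫ s in 0..r, s * φ s := by
  have hindicator (z : ℂ) : (ball (0 : ℂ) r).indicator (fun z => φ ‖z‖) z =
      (Iio r).indicator φ ‖z‖ := by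
    simp [indicator]
  have hweight (s : ℝ) : s ^ (Module.finrank ℝ ℂ - 1) • (Iio r).indicator φ s =
      (Iio r).indicator (fun s => s * φ s) s := by
    simp [Complex.finrank_real_complex, indicator]
  have hvol : (volume : Measure ℂ).real (ball 0 1) = π := by
    simp [Measure.real, Complex.volume_ball]
  rw [← integral_indicator measurableSet_ball]
  simp_rw [hindicator]
  rw [integral_fun_norm_addHaar volume ((Iio r).indicator φ)]
  simp_rw [hweight]
  rw [setIntegral_indicator measurableSet_Iio, Ioi_inter_Iio, ← integral_Ioc_eq_integral_Ioo,
    ← intervalIntegral.integral_of_le hr, hvol, Complex.finrank_real_complex, nsmul_eq_mul,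
    smul_eq_mul, mul_assoc, Nat.cast_ofNat]

theorem integral_ball_radialDensity_norm (hq : q ^ 2 ≠ 1) (hr0 : 0 ≤ r) (hr1 : r < 1) :
    ∫ z in ball (0 : ℂ) r, radialDensity q ‖z‖ = π / (2 * (q ^ 2 - 1)) *
      (1 - (r ^ 2 - 2 * q * r + 1) * ((1 + r) ^ (q - 1) / (1 - r) ^ (q + 1))) := by
  have hq0 : q ^ 2 - 1 ≠ 0 := sub_ne_zero.mpr hq
  rw [integral_ball_fun_norm _ hr0, integral_mul_radialDensity hq hr0 hr1]
  field_simp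
  ring

end RadialDensity

section AreaBounds

variable {h g : ℂ → ℂ} {e z : ℂ} {s : ℝ}

theorem hasDerivAt_harmonicJacobian_ray (hh : AnalyticAt ℂ h (s * e))
    (hg : AnalyticAt ℂ g (s * e)) :
    HasDerivAt (fun t : ℝ => harmonicJacobian h g (t * e))
      (2 * (e * harmonicJacobianDz h g (s * e)).re) s := by
  have hray : HasDerivAt (fun t : ℝ => (t : ℂ) * e) e s := by
    simpa using (hasDerivAt_id s).ofReal_comp.mul_const e
  have hh' := (hh.deriv.differentiableAt.hasDerivAt.comp s hray).norm_sq
  have hg' := (hg.deriv.differentiableAt.hasDerivAt.comp s hray).norm_sq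
  refine (hh'.sub hg').congr_deriv ?_
  rw [Complex.inner, Complex.inner, ← mul_sub, ← sub_re, harmonicJacobianDz]
  simp only [Function.comp_apply]
  ring_nf

namespace ConvexOnDiscs

theorem abs_radial_deriv_sub_le (hf : ConvexOnDiscs h g) (he : ‖e‖ = 1) (hs : ‖(s : ℂ) * e‖ < 1) :
    |(1 - s ^ 2) * (2 * (e * harmonicJacobianDz h g (s * e)).re) -
      4 * s * harmonicJacobian h g (s * e)| ≤ 2 * (4 / √3) * harmonicJacobian h g (s * e) := by
  have hnorm := hf.norm_harmonicJacobianDz_sub_le hs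
  set J := harmonicJacobian h g (s * e)
  set P := harmonicJacobianDz h g (s * e)
  have hns : ‖(s : ℂ) * e‖ ^ 2 = s ^ 2 := by
    rw [norm_mul, he, mul_one, Complex.norm_real, Real.norm_eq_abs, sq_abs]
  have hee : conj e * e = 1 := by rw [Complex.conj_mul', he, ofReal_one, one_pow]
  have hrotate : e * ((1 - ‖(s : ℂ) * e‖ ^ 2) * P - 2 * conj ((s : ℂ) * e) * J) =
      ((1 - s ^ 2 : ℝ) : ℂ) * (e * P) - ((2 * s * J : ℝ) : ℂ) := by
    rw [← ofReal_pow, hns, map_mul, conj_ofReal]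
    push_cast
    linear_combination -2 * s * J * hee
  have habs : |(1 - s ^ 2) * (e * P).re - 2 * s * J| ≤ 4 / √3 * J := by
    calc |(1 - s ^ 2) * (e * P).re - 2 * s * J|
        = |(e * ((1 - ‖(s : ℂ) * e‖ ^ 2) * P - 2 * conj ((s : ℂ) * e) * J)).re| := by
          rw [hrotate, sub_re, re_ofReal_mul, ofReal_re]
      _ ≤ ‖e * ((1 - ‖(s : ℂ) * e‖ ^ 2) * P - 2 * conj ((s : ℂ) * e) * J)‖ := abs_re_le_norm _
      _ ≤ 4 / √3 * J := by rwa [norm_mul, he, one_mul]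
  rw [abs_le] at habs ⊢
  constructor <;> linarith [habs.1, habs.2]

theorem harmonicJacobian_mem_Icc (hf : ConvexOnDiscs h g) (hz : ‖z‖ < 1) :
    harmonicJacobian h g z ∈ Icc (harmonicJacobian h g 0 * radialDensity (-(4 / √3)) ‖z‖)
      (harmonicJacobian h g 0 * radialDensity (4 / √3) ‖z‖) := by
  obtain ⟨e, he, hze⟩ := Complex.exists_norm_mul_eq_self z
  rw [mul_comm] at hze
  have hray : ∀ s ∈ Icc 0 ‖z‖, ‖(s : ℂ) * e‖ < 1 := fun s hs => by
    rw [norm_mul, he, mul_one, Complex.norm_of_nonneg hs.1]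
    exact hs.2.trans_lt hz
  have hderiv : ∀ s ∈ Icc 0 ‖z‖, HasDerivAt (fun t : ℝ => harmonicJacobian h g (t * e))
      (2 * (e * harmonicJacobianDz h g (s * e)).re) s := fun s hs =>
    have hsense := hf.sensePreservingAt _ (mem_ball_zero_iff.mpr (hray s hs))
    hasDerivAt_harmonicJacobian_ray hsense.analyticAt_left hsense.analyticAt_right
  have hbound := fun s hs => abs_le.mp (hf.abs_radial_deriv_sub_le he (hray s hs))
  have hlower := mul_radialDensity_le (q := -(4 / √3)) (norm_nonneg z) hz hderiv
    fun s hs => by linarith [(hbound s hs).1]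
  have hupper := le_mul_radialDensity (q := 4 / √3) (norm_nonneg z) hz hderiv
    fun s hs => by linarith [(hbound s hs).2]
  simp only [hze, ofReal_zero, zero_mul] at hlower hupper
  exact ⟨hlower, hupper⟩

theorem integrableOn_harmonicJacobian (hf : ConvexOnDiscs h g) {r : ℝ} (hr : r < 1) :
    IntegrableOn (harmonicJacobian h g) (ball 0 r) := by
  have hcont : ContinuousOn (harmonicJacobian h g) (closedBall 0 r) := fun z hz =>
    have hsense := hf.sensePreservingAt z (closedBall_subset_ball hr hz)
    have hh := hsense.analyticAt_left.deriv.continuousAt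
    have hg := hsense.analyticAt_right.deriv.continuousAt
    ((hh.norm.pow 2).sub (hg.norm.pow 2)).continuousWithinAt
  exact (hcont.integrableOn_compact (isCompact_closedBall 0 r)).mono_set ball_subset_closedBall

theorem integral_harmonicJacobian_mem_Icc (hf : ConvexOnDiscs h g) {r : ℝ} (hr : r < 1) :
    ∫ z in ball 0 r, harmonicJacobian h g z ∈
      Icc (harmonicJacobian h g 0 * ∫ z in ball (0 : ℂ) r, radialDensity (-(4 / √3)) ‖z‖)
        (harmonicJacobian h g 0 * ∫ z in ball (0 : ℂ) r, radialDensity (4 / √3) ‖z‖) := by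
  have hJ := hf.integrableOn_harmonicJacobian hr
  have hM (q : ℝ) := (integrableOn_radialDensity_norm q hr).const_mul (harmonicJacobian h g 0)
  have hmem : ∀ z ∈ ball (0 : ℂ) r, _ := fun z hz =>
    hf.harmonicJacobian_mem_Icc ((mem_ball_zero_iff.mp hz).trans hr)
  rw [← integral_const_mul, ← integral_const_mul]
  exact ⟨setIntegral_mono_on (hM _) hJ measurableSet_ball fun z hz => (hmem z hz).1,
    setIntegral_mono_on hJ (hM _) measurableSet_ball fun z hz => (hmem z hz).2⟩

end ConvexOnDiscs

theorem four_div_sqrt_three_sq : (4 / √3) ^ 2 = 16 / 3 := by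
  rw [div_pow, Real.sq_sqrt (by norm_num)]
  norm_num

theorem six_mul_four_div_sqrt_three : 6 * (4 / √3) = 8 * √3 := by
  rw [← mul_div_assoc, div_eq_iff (by positivity), mul_assoc, Real.mul_self_sqrt] <;> norm_num

theorem integral_ball_radialDensity_four_div_sqrt_three {r : ℝ} (hr0 : 0 ≤ r) (hr1 : r < 1) :
    ∫ z in ball (0 : ℂ) r, radialDensity (4 / √3) ‖z‖ = π / 26 *
      (3 - (3 * r ^ 2 - 8 * √3 * r + 3) * (1 + r) ^ (4 / √3 - 1) / (1 - r) ^ (4 / √3 + 1)) := by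
  rw [integral_ball_radialDensity_norm (by norm_num [four_div_sqrt_three_sq]) hr0 hr1,
    four_div_sqrt_three_sq, ← six_mul_four_div_sqrt_three]
  ring

theorem integral_ball_radialDensity_neg_four_div_sqrt_three {r : ℝ} (hr0 : 0 ≤ r) (hr1 : r < 1) :
    ∫ z in ball (0 : ℂ) r, radialDensity (-(4 / √3)) ‖z‖ = π / 26 *
      (3 - (3 * r ^ 2 + 8 * √3 * r + 3) * (1 - r) ^ (4 / √3 - 1) / (1 + r) ^ (4 / √3 + 1)) := by
  have hnegPow (q : ℝ) : (1 + r) ^ (-q - 1) / (1 - r) ^ (-q + 1) =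
      (1 - r) ^ (q - 1) / (1 + r) ^ (q + 1) := by
    rw [← neg_add', neg_add_eq_sub, ← neg_sub q 1, Real.rpow_neg (by linarith),
      Real.rpow_neg (by linarith), inv_div_inv]
  rw [integral_ball_radialDensity_norm (by norm_num [neg_sq, four_div_sqrt_three_sq]) hr0 hr1,
    neg_sq, four_div_sqrt_three_sq, ← six_mul_four_div_sqrt_three, hnegPow]
  ring

end AreaBounds

theorem AK_area_bounds_general {h g : ℂ → ℂ} (hf : ConvexOnDiscs h g) {r : ℝ} (hr0 : 0 ≤ r)
    (hr1 : r < 1) :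
    π * harmonicJacobian h g 0 / 26 *
        (3 - (3 * r ^ 2 + 8 * √3 * r + 3) * (1 - r) ^ (4 / √3 - 1) / (1 + r) ^ (4 / √3 + 1))
      ≤ (∫ z in ball (0 : ℂ) r, harmonicJacobian h g z) ∧
    (∫ z in ball (0 : ℂ) r, harmonicJacobian h g z)
      ≤ π * harmonicJacobian h g 0 / 26 *
        (3 - (3 * r ^ 2 - 8 * √3 * r + 3) * (1 + r) ^ (4 / √3 - 1) / (1 - r) ^ (4 / √3 + 1)) := by
  have harea := hf.integral_harmonicJacobian_mem_Icc hr1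
  rw [integral_ball_radialDensity_four_div_sqrt_three hr0 hr1,
    integral_ball_radialDensity_neg_four_div_sqrt_three hr0 hr1] at harea
  have hscale (b : ℝ) : π * harmonicJacobian h g 0 / 26 * b =
      harmonicJacobian h g 0 * (π / 26 * b) := by ring
  rwa [hscale, hscale]

/-- Area bounds: for `f = h + conj g ∈ 𝒜𝒦_H` with `b₁ = g'(0)` and
`0 < r < 1`, the area `A(f(𝔻_r)) = ∬_{𝔻_r} J_f` (with `J_f = |h'|² - |g'|²`) satisfies
the stated lower and upper bounds. -/
theorem AK_area_bounds (h g : ℂ → ℂ)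
    (hh : DifferentiableOn ℂ h (ball (0:ℂ) 1))
    (hg : DifferentiableOn ℂ g (ball (0:ℂ) 1))
    (hsp : ∀ z ∈ ball (0:ℂ) 1, ‖deriv g z‖ < ‖deriv h z‖)
    (h0 : h 0 = 0) (g0 : g 0 = 0) (hd1 : deriv h 0 = 1) (hb1 : ‖deriv g 0‖ < 1)
    (hconv : ∀ a ∈ ball (0:ℂ) 1, ∀ r : ℝ, 0 < r → r < 1 - ‖a‖ →
        Convex ℝ ((fun z => h z + conj (g z)) '' ball a r))
    (r : ℝ) (hr0 : 0 < r) (hr1 : r < 1) :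
    π * (1 - ‖deriv g 0‖ ^ 2) / 26 *
        (3 - (3 * r ^ 2 + 8 * Real.sqrt 3 * r + 3)
          * (1 - r) ^ (4 / Real.sqrt 3 - 1) / (1 + r) ^ (4 / Real.sqrt 3 + 1))
      ≤ (∫ z in ball (0:ℂ) r, (‖deriv h z‖ ^ 2 - ‖deriv g z‖ ^ 2)) ∧
    (∫ z in ball (0:ℂ) r, (‖deriv h z‖ ^ 2 - ‖deriv g z‖ ^ 2))
      ≤ π * (1 - ‖deriv g 0‖ ^ 2) / 26 *
        (3 - (3 * r ^ 2 - 8 * Real.sqrt 3 * r + 3)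
          * (1 + r) ^ (4 / Real.sqrt 3 - 1) / (1 - r) ^ (4 / Real.sqrt 3 + 1)) := by
  have hf : ConvexOnDiscs h g := ⟨fun z hz =>
    ⟨hh.analyticAt (isOpen_ball.mem_nhds hz), hg.analyticAt (isOpen_ball.mem_nhds hz), hsp z hz⟩,
    hconv⟩
  simpa only [harmonicJacobian, hd1, norm_one, one_pow] using
    AK_area_bounds_general hf hr0.le hr1
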